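/- Let X be a set of positive integers, let α ∈ X, and let n ≥ α be an integer. Then the number of partitions with perimeter n whose largest part is α and all of whose parts lie in X equals the binomial coefficient C(|X_α| + n − α − 1, n − α), where X_α = {x ∈ X : x ≤ α}. -/

import Mathlib

open Multiset Finset Filter

/-- A partition is encoded as a nonempty multiset of positive integers (its parts). -/
def IsPartition (M : Multiset ℕ) : Prop := M ≠ 0 ∧ ∀ x ∈ M, 0 < x

/-- The perimeter of a partition: (largest part) + (number of parts) - 1. -/
def perim (M : Multiset ℕ) : ℕ := M.sup + Multiset.card M - 1

/-- `rP n P` counts the partitions (of any sum) with perimeter `n` satisfying `P`. -/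
noncomputable def rP (n : ℕ) (P : Multiset ℕ → Prop) : ℕ :=
  Set.ncard {M : Multiset ℕ | IsPartition M ∧ perim M = n ∧ P M}

/-! Deleting one copy of the largest part `α` from a partition of perimeter `n` leaves an arbitrary
multiset of `n - α` elements of `{x ∈ X | x ≤ α}`, and these are counted by stars and bars. -/

section Multichoose

variable {β : Type*}

theorem setOf_card_eq_forall_mem_eq_range (S : Set β) (k : ℕ) :
    {N : Multiset β | Multiset.card N = k ∧ ∀ x ∈ N, x ∈ S} =
      Set.range fun s : Sym S k => (s : Multiset S).map Subtype.val := by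
  ext N
  constructor
  · rintro ⟨hcard, hmem⟩
    lift N to Multiset S using hmem
    exact ⟨⟨N, by simpa only [Multiset.card_map] using hcard⟩, rfl⟩
  · rintro ⟨s, rfl⟩
    simp +contextual

theorem ncard_setOf_card_eq_forall_mem {S : Set β} (hS : S.Finite) (k : ℕ) :
    {N : Multiset β | Multiset.card N = k ∧ ∀ x ∈ N, x ∈ S}.ncard = S.ncard.multichoose k := by
  classical
  have := hS.fintype
  have hinj : Function.Injective fun s : Sym S k => (s : Multiset S).map Subtype.val :=
    (Multiset.map_injective Subtype.val_injective).comp Sym.coe_injective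
  rw [setOf_card_eq_forall_mem_eq_range, Set.ncard_range_of_injective hinj,
    Nat.card_eq_fintype_card, Sym.card_sym_eq_multichoose, ← Nat.card_eq_fintype_card,
    Nat.card_coe_set_eq]

end Multichoose

section Sup

theorem multiset_sup_cons_eq_left_iff {β : Type*} [SemilatticeSup β] [OrderBot β]
    {a : β} {N : Multiset β} :
    (a ::ₘ N).sup = a ↔ ∀ x ∈ N, x ≤ a := by
  rw [Multiset.sup_cons, sup_eq_left, Multiset.sup_le]

variable {β : Type*} [LinearOrder β] [OrderBot β]

theorem multiset_sup_mem {M : Multiset β} (hM : M ≠ 0) : M.sup ∈ M := by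
  have hne : M.toFinset.Nonempty := Multiset.toFinset_nonempty.mpr hM
  simpa [Finset.sup_def] using Finset.sup_mem_of_nonempty (f := id) hne

theorem setOf_sup_eq_card_eq_succ_eq_image_cons {X : Set β} {a : β} (ha : a ∈ X) (k : ℕ) :
    {M : Multiset β | M.sup = a ∧ Multiset.card M = k + 1 ∧ ∀ x ∈ M, x ∈ X} =
      (a ::ₘ ·) '' {N | Multiset.card N = k ∧ ∀ x ∈ N, x ∈ {x ∈ X | x ≤ a}} := by
  ext M
  constructor
  · rintro ⟨hsup, hcard, hX⟩
    have hM : M ≠ 0 := Multiset.card_pos.mp (by lia)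
    obtain ⟨N, rfl⟩ := Multiset.exists_cons_of_mem (hsup ▸ multiset_sup_mem hM)
    rw [Multiset.card_cons, Nat.add_right_cancel_iff] at hcard
    rw [multiset_sup_cons_eq_left_iff] at hsup
    exact ⟨N, ⟨hcard, fun x hx => ⟨hX x (Multiset.mem_cons_of_mem hx), hsup x hx⟩⟩, rfl⟩
  · rintro ⟨N, ⟨hcard, hN⟩, rfl⟩
    exact ⟨multiset_sup_cons_eq_left_iff.mpr fun x hx => (hN x hx).2,
      by rw [Multiset.card_cons, hcard],
      Multiset.forall_mem_cons.mpr ⟨ha, fun x hx => (hN x hx).1⟩⟩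

theorem ncard_setOf_sup_eq_card_eq_succ {X : Set β} {a : β} (ha : a ∈ X)
    (hfin : {x ∈ X | x ≤ a}.Finite) (k : ℕ) :
    {M : Multiset β | M.sup = a ∧ Multiset.card M = k + 1 ∧ ∀ x ∈ M, x ∈ X}.ncard =
      {x ∈ X | x ≤ a}.ncard.multichoose k := by
  rw [setOf_sup_eq_card_eq_succ_eq_image_cons ha,
    Set.ncard_image_of_injective _ fun _ _ => (Multiset.cons_inj_right a).mp,
    ncard_setOf_card_eq_forall_mem hfin]

end Sup

theorem perim_eq_iff_card_eq {M : Multiset ℕ} {n : ℕ} (hM : M ≠ 0) (hn : M.sup ≤ n) :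
    perim M = n ↔ Multiset.card M = n - M.sup + 1 := by
  have hcard : 0 < Multiset.card M := Multiset.card_pos.mpr hM
  unfold perim
  lia

theorem stmt_9 (X : Set ℕ) (hX : ∀ x ∈ X, 0 < x) (α n : ℕ) (hα : α ∈ X) (hn : α ≤ n) :
    rP n (fun M => M.sup = α ∧ ∀ x ∈ M, x ∈ X) =
      Nat.choose ({x ∈ X | x ≤ α}.ncard + n - α - 1) (n - α) := by
  have hparts (M : Multiset ℕ) :
      (IsPartition M ∧ perim M = n ∧ M.sup = α ∧ ∀ x ∈ M, x ∈ X) ↔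
        M.sup = α ∧ Multiset.card M = n - α + 1 ∧ ∀ x ∈ M, x ∈ X := by
    constructor
    · rintro ⟨⟨hM, -⟩, hperim, rfl, hMX⟩
      exact ⟨rfl, (perim_eq_iff_card_eq hM hn).mp hperim, hMX⟩
    · rintro ⟨rfl, hcard, hMX⟩
      have hM : M ≠ 0 := Multiset.card_pos.mp (by lia)
      exact ⟨⟨hM, fun x hx => hX x (hMX x hx)⟩, (perim_eq_iff_card_eq hM hn).mpr hcard, rfl, hMX⟩
  have hfin : {x ∈ X | x ≤ α}.Finite := (Set.finite_Iic α).subset fun _ hx => hx.2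
  simp only [rP, hparts]
  rw [ncard_setOf_sup_eq_card_eq_succ hα hfin, Nat.multichoose_eq, Nat.add_sub_assoc hn]
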